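/- Fix α > 1, Δ > 0, ρ ≥ 0, γ ≥ 0 and π ∈ ℝ. With η(α,λ) := 1 + (1/2)(α − 1 + λ − √(4λ + (α − 1 + λ)²)), the composite expressions g(α,Δ,ρ,η(α,λ))·(1 − π² A(η(α,λ))) and t(α,Δ,ρ,η(α,λ))·(1 − π² A(η(α,λ))) converge, as λ → 0⁺, to Δα/(α − 1) and Δ(α − 1)/α respectively; in particular the limits are independent of π, ρ and γ. -/

import Mathlib

open Filter

/-- The effective regularization parameter
`η(α,λ) := 1 + (1/2)(α − 1 + λ − √(4λ + (α − 1 + λ)²))`. -/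
noncomputable def etaFun (α lam : ℝ) : ℝ :=
  1 + (1/2) * (α - 1 + lam - Real.sqrt (4*lam + (α - 1 + lam)^2))

/-- The correction factor `A(η)`. -/
noncomputable def AFun (Δ ρ γ η : ℝ) : ℝ :=
  (η-1)^2 * (γ*η^2 + 2*η - 1) / ((Δ + (η-1)^2*ρ) * (1+γ*η)^2)

/-- The Gaussian generalization error `g(α,Δ,ρ,η)`. -/
noncomputable def gFun (α Δ ρ η : ℝ) : ℝ :=
  α * (Δ + (η-1)^2*ρ) / (α - η^2)

/-- The Gaussian training error `t(α,Δ,ρ,η)`. -/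
noncomputable def tFun (α Δ ρ η : ℝ) : ℝ :=
  (α-η)^2 * (Δ + (η-1)^2*ρ) / (α * (α - η^2))

/-!
Write `D(η) = Δ + (η - 1)² ρ`. Both `g` and `t` are `D` times a factor regular at `η = 1`, while
`A = B / D` with `B` free of `Δ` and `ρ`, so the errors depend on `A` only through
`D (1 - π² A) = D - π² B`. As `λ → 0` with `1 < α`, one has `η → 1`, where `B` vanishes and `D`
equals `Δ`.
-/

open scoped Topology

section EffectiveNoise

variable (Δ ρ γ : ℝ)

/-- The factor `D(η) = Δ + (η - 1)² ρ` common to `g`, `t` and the denominator of `A`. -/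
def effectiveNoise (η : ℝ) : ℝ :=
  Δ + (η - 1) ^ 2 * ρ

/-- The unnormalized teacher correction `B(η)`, for which `A(η) = B(η) / D(η)`. At `γ = -1`, `η = 1`
it is `0 / 0 = 0`, which happens to be the value that makes it continuous. -/
noncomputable def teacherCorrection (η : ℝ) : ℝ :=
  (η - 1) ^ 2 * (γ * η ^ 2 + 2 * η - 1) / (1 + γ * η) ^ 2

theorem AFun_eq_div (η : ℝ) :
    AFun Δ ρ γ η = teacherCorrection γ η / effectiveNoise Δ ρ η := by
  rw [AFun, teacherCorrection, effectiveNoise, div_div, mul_comm ((1 + γ * η) ^ 2)]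

theorem gFun_eq_mul_effectiveNoise (α η : ℝ) :
    gFun α Δ ρ η = α / (α - η ^ 2) * effectiveNoise Δ ρ η :=
  mul_div_right_comm _ _ _

theorem tFun_eq_mul_effectiveNoise (α η : ℝ) :
    tFun α Δ ρ η = (α - η) ^ 2 / (α * (α - η ^ 2)) * effectiveNoise Δ ρ η :=
  mul_div_right_comm _ _ _

theorem tendsto_effectiveNoise : Tendsto (effectiveNoise Δ ρ) (𝓝 1) (𝓝 Δ) := by
  have hcont : Continuous (effectiveNoise Δ ρ) := by
    unfold effectiveNoise
    fun_prop
  simpa [effectiveNoise] using hcont.tendsto 1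

theorem teacherCorrection_neg_one (η : ℝ) : teacherCorrection (-1) η = -(η - 1) ^ 2 := by
  rcases eq_or_ne η 1 with rfl | hη
  · simp [teacherCorrection]
  · have hden : 1 + -1 * η ≠ 0 := fun h => hη (by linarith)
    rw [teacherCorrection, div_eq_iff (pow_ne_zero 2 hden)]
    ring

theorem tendsto_teacherCorrection : Tendsto (teacherCorrection γ) (𝓝 1) (𝓝 0) := by
  have hcont : ContinuousAt (teacherCorrection γ) 1 := by
    rcases eq_or_ne γ (-1) with rfl | hγ
    · rw [funext teacherCorrection_neg_one]
      fun_prop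
    · have hden : 1 + γ * 1 ≠ 0 := fun h => hγ (by linarith)
      exact ContinuousAt.div (by fun_prop) (by fun_prop) (pow_ne_zero 2 hden)
  simpa [teacherCorrection] using hcont.tendsto

variable {Δ ρ}

theorem effectiveNoise_mul_one_sub {η : ℝ} (hD : effectiveNoise Δ ρ η ≠ 0) (c : ℝ) :
    effectiveNoise Δ ρ η * (1 - c * AFun Δ ρ γ η) =
      effectiveNoise Δ ρ η - c * teacherCorrection γ η := by
  rw [AFun_eq_div]
  field_simp

theorem eventually_effectiveNoise_ne_zero (h : Δ ≠ 0 ∨ ρ ≠ 0) :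
    ∀ᶠ η in 𝓝[≠] 1, effectiveNoise Δ ρ η ≠ 0 := by
  rcases eq_or_ne Δ 0 with rfl | hΔ
  · filter_upwards [self_mem_nhdsWithin] with η hη
    simpa [effectiveNoise, sub_eq_zero] using ⟨hη, h.resolve_left (not_not_intro rfl)⟩
  · exact ((tendsto_effectiveNoise Δ ρ).eventually_ne hΔ).filter_mono nhdsWithin_le_nhds

theorem tendsto_effectiveNoise_mul_one_sub (h : Δ ≠ 0 ∨ ρ ≠ 0) (c : ℝ) :
    Tendsto (fun η => effectiveNoise Δ ρ η * (1 - c * AFun Δ ρ γ η)) (𝓝[≠] 1) (𝓝 Δ) := by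
  have hlim : Tendsto (fun η => effectiveNoise Δ ρ η - c * teacherCorrection γ η)
      (𝓝 1) (𝓝 Δ) := by
    simpa using (tendsto_effectiveNoise Δ ρ).sub ((tendsto_teacherCorrection γ).const_mul c)
  refine (hlim.mono_left nhdsWithin_le_nhds).congr' ?_
  filter_upwards [eventually_effectiveNoise_ne_zero h] with η hD
  exact (effectiveNoise_mul_one_sub γ hD c).symm

theorem tendsto_gFun_mul_one_sub {α : ℝ} (hα : α ≠ 1) (h : Δ ≠ 0 ∨ ρ ≠ 0) (c : ℝ) :
    Tendsto (fun η => gFun α Δ ρ η * (1 - c * AFun Δ ρ γ η)) (𝓝[≠] 1)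
      (𝓝 (Δ * α / (α - 1))) := by
  have hden : α - 1 ^ 2 ≠ 0 := by simpa [sub_eq_zero] using hα
  have hfactor : ContinuousAt (fun η : ℝ => α / (α - η ^ 2)) 1 :=
    ContinuousAt.div (by fun_prop) (by fun_prop) hden
  have hlimit : Δ * α / (α - 1) = α / (α - 1 ^ 2) * Δ := by ring
  simp_rw [hlimit, gFun_eq_mul_effectiveNoise, mul_assoc]
  exact (hfactor.tendsto.mono_left nhdsWithin_le_nhds).mul
    (tendsto_effectiveNoise_mul_one_sub γ h c)

theorem tendsto_tFun_mul_one_sub {α : ℝ} (hα₀ : α ≠ 0) (hα₁ : α ≠ 1) (h : Δ ≠ 0 ∨ ρ ≠ 0)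
    (c : ℝ) :
    Tendsto (fun η => tFun α Δ ρ η * (1 - c * AFun Δ ρ γ η)) (𝓝[≠] 1)
      (𝓝 (Δ * (α - 1) / α)) := by
  have hα₁' : α - 1 ≠ 0 := sub_ne_zero.mpr hα₁
  have hden : α * (α - 1 ^ 2) ≠ 0 := by simpa using ⟨hα₀, hα₁'⟩
  have hfactor : ContinuousAt (fun η : ℝ => (α - η) ^ 2 / (α * (α - η ^ 2))) 1 :=
    ContinuousAt.div (by fun_prop) (by fun_prop) hden
  have hlimit : Δ * (α - 1) / α = (α - 1) ^ 2 / (α * (α - 1 ^ 2)) * Δ := by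
    rw [one_pow]
    field_simp
  simp_rw [hlimit, tFun_eq_mul_effectiveNoise, mul_assoc]
  exact (hfactor.tendsto.mono_left nhdsWithin_le_nhds).mul
    (tendsto_effectiveNoise_mul_one_sub γ h c)

end EffectiveNoise

section Eta

variable {α : ℝ}

theorem continuous_etaFun (α : ℝ) : Continuous (etaFun α) := by
  unfold etaFun
  fun_prop

theorem etaFun_zero (hα : 1 ≤ α) : etaFun α 0 = 1 := by
  simp [etaFun, Real.sqrt_sq (sub_nonneg.mpr hα)]

theorem etaFun_ne_one {lam : ℝ} (hpos : 0 < α - 1 + lam) (hlam : lam ≠ 0) :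
    etaFun α lam ≠ 1 := by
  intro hη
  have hsqrt : √(4 * lam + (α - 1 + lam) ^ 2) = α - 1 + lam := by
    unfold etaFun at hη
    linarith
  rw [Real.sqrt_eq_iff_mul_self_eq_of_pos hpos] at hsqrt
  exact hlam (by linarith)

theorem tendsto_etaFun (hα : 1 < α) : Tendsto (etaFun α) (𝓝[≠] 0) (𝓝[≠] 1) := by
  have hlim : Tendsto (etaFun α) (𝓝[≠] 0) (𝓝 1) := by
    simpa only [etaFun_zero hα.le] using
      ((continuous_etaFun α).tendsto 0).mono_left nhdsWithin_le_nhds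
  have hpos : ∀ᶠ lam in 𝓝[≠] (0 : ℝ), 1 - α < lam :=
    (eventually_gt_nhds (sub_neg.mpr hα)).filter_mono nhdsWithin_le_nhds
  refine tendsto_nhdsWithin_iff.mpr ⟨hlim, ?_⟩
  filter_upwards [hpos, self_mem_nhdsWithin] with lam hgt hlam
  exact etaFun_ne_one (by linarith) hlam

end Eta

theorem universality_restoration_underparam_general
    (α Δ ρ γ π : ℝ) (hα : 1 < α) (h : Δ ≠ 0 ∨ ρ ≠ 0) :
    Tendsto
      (fun lam : ℝ =>
        gFun α Δ ρ (etaFun α lam) * (1 - π^2 * AFun Δ ρ γ (etaFun α lam)))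
      (𝓝[≠] 0) (𝓝 (Δ * α / (α - 1))) ∧
    Tendsto
      (fun lam : ℝ =>
        tFun α Δ ρ (etaFun α lam) * (1 - π^2 * AFun Δ ρ γ (etaFun α lam)))
      (𝓝[≠] 0) (𝓝 (Δ * (α - 1) / α)) :=
  ⟨(tendsto_gFun_mul_one_sub γ hα.ne' h (π ^ 2)).comp (tendsto_etaFun hα),
    (tendsto_tFun_mul_one_sub γ (zero_lt_one.trans hα).ne' hα.ne' h (π ^ 2)).comp
      (tendsto_etaFun hα)⟩

/-- Restoration of Gaussian universality for correlated teachers in the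
underparametrized regime `α > 1` at vanishing regularization: as `λ → 0⁺`,
the generalization error `g·(1 − π²A)` tends to `Δα/(α − 1)` and the training
error `t·(1 − π²A)` tends to `Δ(α − 1)/α`, independently of `π, ρ, γ`. -/
theorem universality_restoration_underparam
    (α Δ ρ γ π : ℝ) (hα : 1 < α) (hΔ : 0 < Δ) (hρ : 0 ≤ ρ) (hγ : 0 ≤ γ) :
    Tendsto
      (fun lam : ℝ =>
        gFun α Δ ρ (etaFun α lam) * (1 - π^2 * AFun Δ ρ γ (etaFun α lam)))
      (nhdsWithin 0 (Set.Ioi 0)) (nhds (Δ * α / (α - 1))) ∧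
    Tendsto
      (fun lam : ℝ =>
        tFun α Δ ρ (etaFun α lam) * (1 - π^2 * AFun Δ ρ γ (etaFun α lam)))
      (nhdsWithin 0 (Set.Ioi 0)) (nhds (Δ * (α - 1) / α)) :=
  (universality_restoration_underparam_general α Δ ρ γ π hα (.inl hΔ.ne')).imp
    (·.mono_left (nhdsGT_le_nhdsNE 0)) (·.mono_left (nhdsGT_le_nhdsNE 0))
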